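/- arXiv:1212.1635 — 2 statements merged into one kernel-verified Lean document; each statement's English description precedes it below -/
import Mathlib

section
/- Let (ρ, u) be a smooth (C^∞) solution of the steady isentropic compressible Euler equations on U with ρ > 0 everywhere (stagnation points are allowed). Then, with w = curl u, the identity |u|² (u·∇)((u·w)/ρ) − ((u·w)/ρ)(u·∇)(|u|²) + (2c²(ρ)/ρ²)(|u|²(w·∇)ρ − (u·w)(u·∇)ρ) = 0 holds on U, where |u|² = u₁² + u₂² + u₃² and u·w = u₁w₁ + u₂w₂ + u₃w₃. -/
/-- Partial derivative in direction `i` of a scalar function on `ℝ³`. -/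
noncomputable def pd (i : Fin 3) (f : (Fin 3 → ℝ) → ℝ) (x : Fin 3 → ℝ) : ℝ :=
  fderiv ℝ f x (Pi.single i 1)

/-- The curl of a vector field on `ℝ³`. -/
noncomputable def curl (u : Fin 3 → (Fin 3 → ℝ) → ℝ) : Fin 3 → (Fin 3 → ℝ) → ℝ :=
  ![fun x => pd 1 (u 2) x - pd 2 (u 1) x,
    fun x => pd 2 (u 0) x - pd 0 (u 2) x,
    fun x => pd 0 (u 1) x - pd 1 (u 0) x]

namespace HelAux

lemma pd_add {f g : (Fin 3 → ℝ) → ℝ} {x : Fin 3 → ℝ} (k : Fin 3)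
    (hf : DifferentiableAt ℝ f x) (hg : DifferentiableAt ℝ g x) :
    pd k (fun y => f y + g y) x = pd k f x + pd k g x := by
  have := (hf.hasFDerivAt.add hg.hasFDerivAt).fderiv
  unfold pd
  change fderiv ℝ (f + g) x _ = _
  rw [this]; simp

lemma pd_sub {f g : (Fin 3 → ℝ) → ℝ} {x : Fin 3 → ℝ} (k : Fin 3)
    (hf : DifferentiableAt ℝ f x) (hg : DifferentiableAt ℝ g x) :
    pd k (fun y => f y - g y) x = pd k f x - pd k g x := by
  have := (hf.hasFDerivAt.sub hg.hasFDerivAt).fderiv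
  unfold pd
  change fderiv ℝ (f - g) x _ = _
  rw [this]; simp

lemma pd_mul {f g : (Fin 3 → ℝ) → ℝ} {x : Fin 3 → ℝ} (k : Fin 3)
    (hf : DifferentiableAt ℝ f x) (hg : DifferentiableAt ℝ g x) :
    pd k (fun y => f y * g y) x = f x * pd k g x + pd k f x * g x := by
  have := (hf.hasFDerivAt.mul hg.hasFDerivAt).fderiv
  unfold pd
  change fderiv ℝ (f * g) x _ = _
  rw [this]; simp; ring

lemma pd_div {f g : (Fin 3 → ℝ) → ℝ} {x : Fin 3 → ℝ} (k : Fin 3)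
    (hf : DifferentiableAt ℝ f x) (hg : DifferentiableAt ℝ g x) (h0 : g x ≠ 0) :
    pd k (fun y => f y / g y) x = (pd k f x * g x - f x * pd k g x) / g x ^ 2 := by
  have hq : DifferentiableAt ℝ (fun y => f y / g y) x := by
    simp only [div_eq_mul_inv]
    exact hf.mul (hg.inv h0)
  have h1 := pd_mul k hq hg
  have h2 : pd k (fun y => f y / g y * g y) x = pd k f x := by
    unfold pd
    have : (fun y => f y / g y * g y) =ᶠ[nhds x] f := by
      filter_upwards [hg.continuousAt.eventually_ne h0] with y hy
      field_simp
    rw [this.fderiv_eq]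
  rw [h2] at h1
  rw [h1]; field_simp; ring

lemma pd_rpow {f : (Fin 3 → ℝ) → ℝ} {x : Fin 3 → ℝ} (k : Fin 3) (p : ℝ) (hp : p ≠ 0)
    (hf : DifferentiableAt ℝ f x) (h0 : 0 < f x) :
    pd k (fun y => f y ^ p / p) x = f x ^ (p - 1) * pd k f x := by
  have h := ((hf.hasFDerivAt.rpow_const (p := p) (Or.inl h0.ne')).mul_const (p⁻¹)).fderiv
  unfold pd
  simp only [div_eq_mul_inv]
  rw [h]; simp; field_simp

lemma pd_congr {U : Set (Fin 3 → ℝ)} (hU : IsOpen U) {f g : (Fin 3 → ℝ) → ℝ}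
    (h : ∀ y ∈ U, f y = g y) {x : Fin 3 → ℝ} (hx : x ∈ U) (k : Fin 3) :
    pd k f x = pd k g x := by
  unfold pd
  have : f =ᶠ[nhds x] g := by
    filter_upwards [hU.mem_nhds hx] with y hy using h y hy
  rw [this.fderiv_eq]

lemma pd_zero (x : Fin 3 → ℝ) (k : Fin 3) : pd k (fun _ => (0 : ℝ)) x = 0 := by
  simp [pd]

lemma diff_pd {U : Set (Fin 3 → ℝ)} (hU : IsOpen U) {f : (Fin 3 → ℝ) → ℝ}
    (hf : ContDiffOn ℝ (⊤ : ℕ∞) f U) {x : Fin 3 → ℝ} (hx : x ∈ U) (k : Fin 3) :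
    DifferentiableAt ℝ (pd k f) x := by
  have h : ContDiffAt ℝ 2 f x :=
    (hf.contDiffAt (hU.mem_nhds hx)).of_le (WithTop.coe_le_coe.2 (le_top : (2 : ℕ∞) ≤ ⊤))
  have h1 : DifferentiableAt ℝ (fderiv ℝ f) x :=
    (h.fderiv_right (m := 1) (by norm_num)).differentiableAt (by norm_num)
  exact h1.clm_apply (differentiableAt_const _)

lemma pd_symm {U : Set (Fin 3 → ℝ)} (hU : IsOpen U) {f : (Fin 3 → ℝ) → ℝ}
    (hf : ContDiffOn ℝ (⊤ : ℕ∞) f U) {x : Fin 3 → ℝ} (hx : x ∈ U) (j k : Fin 3) :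
    pd k (pd j f) x = pd j (pd k f) x := by
  have h : ContDiffAt ℝ 2 f x :=
    (hf.contDiffAt (hU.mem_nhds hx)).of_le (WithTop.coe_le_coe.2 (le_top : (2 : ℕ∞) ≤ ⊤))
  have h1 : DifferentiableAt ℝ (fderiv ℝ f) x :=
    (h.fderiv_right (m := 1) (by norm_num)).differentiableAt (by norm_num)
  have key : ∀ a b : Fin 3, pd a (pd b f) x
      = fderiv ℝ (fderiv ℝ f) x (Pi.single a 1) (Pi.single b 1) := by
    intro a b
    have e := (h1.hasFDerivAt.clm_apply
      (hasFDerivAt_const (Pi.single b (1 : ℝ) : Fin 3 → ℝ) x)).fderiv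
    change fderiv ℝ (fun y => fderiv ℝ f y (Pi.single b 1)) x (Pi.single a 1) = _
    rw [e]; simp
  rw [key, key]
  exact (h.isSymmSndFDerivAt (by simp)) _ _

end HelAux

open HelAux in
/-- identity (3.15) for the helicity-type quantity `(u·w)/ρ`,
valid even in the presence of stagnation points. -/
theorem helicity_identity
    (U : Set (Fin 3 → ℝ)) (hU : IsOpen U) (γ : ℝ) (hγ1 : 1 < γ) (hγ3 : γ < 3)
    (ρ : (Fin 3 → ℝ) → ℝ) (u : Fin 3 → (Fin 3 → ℝ) → ℝ)
    (hρ : ContDiffOn ℝ (⊤ : ℕ∞) ρ U) (hu : ∀ i, ContDiffOn ℝ (⊤ : ℕ∞) (u i) U)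
    (hρpos : ∀ x ∈ U, 0 < ρ x)
    (hmass : ∀ x ∈ U,
      pd 0 (fun y => ρ y * u 0 y) x + pd 1 (fun y => ρ y * u 1 y) x
        + pd 2 (fun y => ρ y * u 2 y) x = 0)
    (hmom : ∀ i : Fin 3, ∀ x ∈ U,
      pd 0 (fun y => ρ y * u i y * u 0 y) x + pd 1 (fun y => ρ y * u i y * u 1 y) x
        + pd 2 (fun y => ρ y * u i y * u 2 y) x + pd i (fun y => ρ y ^ γ / γ) x = 0)
    (n2 uw : (Fin 3 → ℝ) → ℝ)
    (hn2 : n2 = fun y => u 0 y ^ 2 + u 1 y ^ 2 + u 2 y ^ 2)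
    (huw : uw = fun y => u 0 y * curl u 0 y + u 1 y * curl u 1 y + u 2 y * curl u 2 y) :
    ∀ x ∈ U,
      n2 x * (u 0 x * pd 0 (fun y => uw y / ρ y) x + u 1 x * pd 1 (fun y => uw y / ρ y) x
          + u 2 x * pd 2 (fun y => uw y / ρ y) x)
        - uw x / ρ x * (u 0 x * pd 0 n2 x + u 1 x * pd 1 n2 x + u 2 x * pd 2 n2 x)
        + 2 * ρ x ^ (γ - 1) / ρ x ^ 2 *
          (n2 x * (curl u 0 x * pd 0 ρ x + curl u 1 x * pd 1 ρ x + curl u 2 x * pd 2 ρ x)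
            - uw x * (u 0 x * pd 0 ρ x + u 1 x * pd 1 ρ x + u 2 x * pd 2 ρ x)) = 0 := by
  have dρ : ∀ y ∈ U, DifferentiableAt ℝ ρ y := fun y hy =>
    (hρ.contDiffAt (hU.mem_nhds hy)).differentiableAt (by simp)
  have du : ∀ i, ∀ y ∈ U, DifferentiableAt ℝ (u i) y := fun i y hy =>
    ((hu i).contDiffAt (hU.mem_nhds hy)).differentiableAt (by simp)
  have dA : ∀ i j, ∀ y ∈ U, DifferentiableAt ℝ (pd j (u i)) y := fun i j y hy =>
    diff_pd hU (hu i) hy j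
  -- enthalpy
  obtain ⟨h, hh⟩ : ∃ h : (Fin 3 → ℝ) → ℝ, h = fun y => ρ y ^ (γ - 1) / (γ - 1) := ⟨_, rfl⟩
  have sh : ContDiffOn ℝ (⊤ : ℕ∞) h U := by
    rw [hh]
    exact (hρ.rpow_const_of_ne (fun y hy => (hρpos y hy).ne')).div_const _
  have dH : ∀ j, ∀ y ∈ U, DifferentiableAt ℝ (pd j h) y := fun j y hy => diff_pd hU sh hy j
  have hpd : ∀ k, ∀ y ∈ U, pd k h y = ρ y ^ (γ - 1) / ρ y * pd k ρ y := by
    intro k y hy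
    rw [hh, pd_rpow k (γ - 1) (by linarith) (dρ y hy) (hρpos y hy),
      Real.rpow_sub_one (hρpos y hy).ne']
  have hm : ∀ y ∈ U, ρ y * (pd 0 (u 0) y + pd 1 (u 1) y + pd 2 (u 2) y)
      + (u 0 y * pd 0 ρ y + u 1 y * pd 1 ρ y + u 2 y * pd 2 ρ y) = 0 := by
    intro y hy
    have := hmass y hy
    rw [pd_mul _ (dρ y hy) (du 0 y hy), pd_mul _ (dρ y hy) (du 1 y hy),
      pd_mul _ (dρ y hy) (du 2 y hy)] at this
    linarith
  have hM : ∀ i, ∀ y ∈ U, u 0 y * pd 0 (u i) y + u 1 y * pd 1 (u i) y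
      + u 2 y * pd 2 (u i) y + pd i h y = 0 := by
    intro i y hy
    have h1 := hmom i y hy
    have dm : DifferentiableAt ℝ (fun z => ρ z * u i z) y := (dρ y hy).mul (du i y hy)
    rw [pd_mul _ dm (du 0 y hy), pd_mul _ dm (du 1 y hy), pd_mul _ dm (du 2 y hy),
      pd_mul _ (dρ y hy) (du i y hy), pd_mul _ (dρ y hy) (du i y hy),
      pd_mul _ (dρ y hy) (du i y hy),
      pd_rpow i γ (by linarith) (dρ y hy) (hρpos y hy)] at h1
    have h2 := hm y hy
    have hp := (hρpos y hy).ne'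
    have h3 : ρ y * pd i h y = ρ y ^ (γ - 1) * pd i ρ y := by
      rw [hpd i y hy]; field_simp
    apply mul_left_cancel₀ hp
    linear_combination h1 - u i y * h2 + h3
  intro x hx
  have hD : ∀ i k, (u 0 x * pd k (pd 0 (u i)) x + pd k (u 0) x * pd 0 (u i) x)
      + (u 1 x * pd k (pd 1 (u i)) x + pd k (u 1) x * pd 1 (u i) x)
      + (u 2 x * pd k (pd 2 (u i)) x + pd k (u 2) x * pd 2 (u i) x)
      + pd k (pd i h) x = 0 := by
    intro i k
    have e := pd_congr hU (hM i) hx k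
    have d0 : DifferentiableAt ℝ (fun y => u 0 y * pd 0 (u i) y) x := (du 0 x hx).mul (dA i 0 x hx)
    have d1 : DifferentiableAt ℝ (fun y => u 1 y * pd 1 (u i) y) x := (du 1 x hx).mul (dA i 1 x hx)
    have d2 : DifferentiableAt ℝ (fun y => u 2 y * pd 2 (u i) y) x := (du 2 x hx).mul (dA i 2 x hx)
    have d01 : DifferentiableAt ℝ (fun y => u 0 y * pd 0 (u i) y + u 1 y * pd 1 (u i) y) x := d0.add d1
    have d012 : DifferentiableAt ℝ (fun y => u 0 y * pd 0 (u i) y + u 1 y * pd 1 (u i) y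
        + u 2 y * pd 2 (u i) y) x := d01.add d2
    rw [pd_zero, pd_add k d012 (dH i x hx), pd_add k d01 d2, pd_add k d0 d1,
      pd_mul k (du 0 x hx) (dA i 0 x hx), pd_mul k (du 1 x hx) (dA i 1 x hx),
      pd_mul k (du 2 x hx) (dA i 2 x hx)] at e
    exact e
  have c0 : curl u 0 = fun x => pd 1 (u 2) x - pd 2 (u 1) x := rfl
  have c1 : curl u 1 = fun x => pd 2 (u 0) x - pd 0 (u 2) x := rfl
  have c2 : curl u 2 = fun x => pd 0 (u 1) x - pd 1 (u 0) x := rfl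
  have dc0 : DifferentiableAt ℝ (curl u 0) x := by
    rw [c0]; exact (dA 2 1 x hx).sub (dA 1 2 x hx)
  have dc1 : DifferentiableAt ℝ (curl u 1) x := by
    rw [c1]; exact (dA 0 2 x hx).sub (dA 2 0 x hx)
  have dc2 : DifferentiableAt ℝ (curl u 2) x := by
    rw [c2]; exact (dA 1 0 x hx).sub (dA 0 1 x hx)
  have q0 := fun k => pd_sub k (dA 2 1 x hx) (dA 1 2 x hx)
  have q1 := fun k => pd_sub k (dA 0 2 x hx) (dA 2 0 x hx)
  have q2 := fun k => pd_sub k (dA 1 0 x hx) (dA 0 1 x hx)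
  have m0 : DifferentiableAt ℝ (fun y => u 0 y * curl u 0 y) x := (du 0 x hx).mul dc0
  have m1 : DifferentiableAt ℝ (fun y => u 1 y * curl u 1 y) x := (du 1 x hx).mul dc1
  have m2 : DifferentiableAt ℝ (fun y => u 2 y * curl u 2 y) x := (du 2 x hx).mul dc2
  have m01 : DifferentiableAt ℝ (fun y => u 0 y * curl u 0 y + u 1 y * curl u 1 y) x := m0.add m1
  have duw : DifferentiableAt ℝ uw x := by
    rw [huw]; exact m01.add m2
  have huwk : ∀ k, pd k uw x =
      (u 0 x * (pd k (pd 1 (u 2)) x - pd k (pd 2 (u 1)) x)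
        + pd k (u 0) x * (pd 1 (u 2) x - pd 2 (u 1) x))
      + (u 1 x * (pd k (pd 2 (u 0)) x - pd k (pd 0 (u 2)) x)
        + pd k (u 1) x * (pd 2 (u 0) x - pd 0 (u 2) x))
      + (u 2 x * (pd k (pd 0 (u 1)) x - pd k (pd 1 (u 0)) x)
        + pd k (u 2) x * (pd 0 (u 1) x - pd 1 (u 0) x)) := by
    intro k
    rw [huw, pd_add k m01 m2, pd_add k m0 m1, pd_mul k (du 0 x hx) dc0,
      pd_mul k (du 1 x hx) dc1, pd_mul k (du 2 x hx) dc2, c0, c1, c2, q0, q1, q2]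
  have hn2k : ∀ k, pd k n2 x = 2 * (u 0 x * pd k (u 0) x + u 1 x * pd k (u 1) x
      + u 2 x * pd k (u 2) x) := by
    intro k
    have s0 : DifferentiableAt ℝ (fun y => u 0 y * u 0 y) x := (du 0 x hx).mul (du 0 x hx)
    have s1 : DifferentiableAt ℝ (fun y => u 1 y * u 1 y) x := (du 1 x hx).mul (du 1 x hx)
    have s2 : DifferentiableAt ℝ (fun y => u 2 y * u 2 y) x := (du 2 x hx).mul (du 2 x hx)
    have s01 : DifferentiableAt ℝ (fun y => u 0 y * u 0 y + u 1 y * u 1 y) x := s0.add s1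
    simp only [hn2, pow_two]
    rw [pd_add k s01 s2, pd_add k s0 s1, pd_mul k (du 0 x hx) (du 0 x hx),
      pd_mul k (du 1 x hx) (du 1 x hx), pd_mul k (du 2 x hx) (du 2 x hx)]
    ring
  have huwx : uw x = u 0 x * (pd 1 (u 2) x - pd 2 (u 1) x)
      + u 1 x * (pd 2 (u 0) x - pd 0 (u 2) x) + u 2 x * (pd 0 (u 1) x - pd 1 (u 0) x) := by
    rw [huw, c0, c1, c2]
  have T1 : u 0 x * pd 0 uw x + u 1 x * pd 1 uw x + u 2 x * pd 2 uw x
      = -uw x * (pd 0 (u 0) x + pd 1 (u 1) x + pd 2 (u 2) x)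
        - 2 * ((pd 1 (u 2) x - pd 2 (u 1) x) * pd 0 h x
          + (pd 2 (u 0) x - pd 0 (u 2) x) * pd 1 h x
          + (pd 0 (u 1) x - pd 1 (u 0) x) * pd 2 h x) := by
    have D21 := hD 2 1
    have D12 := hD 1 2
    have D02 := hD 0 2
    have D20 := hD 2 0
    have D10 := hD 1 0
    have D01 := hD 0 1
    rw [huwk, huwk, huwk, huwx]
    simp only [fun i => pd_symm hU (hu i) hx 0 1, fun i => pd_symm hU (hu i) hx 0 2,
      fun i => pd_symm hU (hu i) hx 1 2, pd_symm hU sh hx 0 1, pd_symm hU sh hx 0 2,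
      pd_symm hU sh hx 1 2] at D21 D12 D02 D20 D10 D01 ⊢
    linear_combination u 0 x * (D21 - D12) + u 1 x * (D02 - D20) + u 2 x * (D10 - D01)
      + 2 * (pd 1 (u 2) x - pd 2 (u 1) x) * hM 0 x hx
      + 2 * (pd 2 (u 0) x - pd 0 (u 2) x) * hM 1 x hx
      + 2 * (pd 0 (u 1) x - pd 1 (u 0) x) * hM 2 x hx
  have T2 : u 0 x * pd 0 n2 x + u 1 x * pd 1 n2 x + u 2 x * pd 2 n2 x
      = -2 * (u 0 x * pd 0 h x + u 1 x * pd 1 h x + u 2 x * pd 2 h x) := by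
    rw [hn2k, hn2k, hn2k]
    linear_combination 2 * u 0 x * hM 0 x hx + 2 * u 1 x * hM 1 x hx + 2 * u 2 x * hM 2 x hx
  have hp := (hρpos x hx).ne'
  have hmx := hm x hx
  rw [T2, pd_div 0 duw (dρ x hx) hp, pd_div 1 duw (dρ x hx) hp, pd_div 2 duw (dρ x hx) hp,
    c0, c1, c2]
  rw [hpd 0 x hx, hpd 1 x hx, hpd 2 x hx] at T1 ⊢
  generalize ρ x ^ (γ - 1) = P at *
  field_simp at T1 ⊢
  linear_combination n2 x * T1 - n2 x * uw x * hmx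
end

section
/- (Theorem 3.1.) Let (ρ, u) be a smooth (C^∞) solution of the steady isentropic compressible Euler equations on U with ρ > 0 and u₁ > 0 everywhere. Then the quantity W satisfies D(W/(ρG)) + (c²(ρ)/(2ρ²(B − h(ρ))²)) · [(1, β₂, β₃)·(∇ρ × ∇B)] = 0 on U, where ∇ρ × ∇B denotes the cross product of the gradients of ρ and B. (Note B − h(ρ) = |u|²/2 > 0 since u₁ > 0.) In particular, if B is constant on U then D(W/(ρG)) = 0. -/
/-- The operator `D = ∂₁ + β₂ ∂₂ + β₃ ∂₃`. -/
noncomputable def Dop (β₂ β₃ : (Fin 3 → ℝ) → ℝ) (f : (Fin 3 → ℝ) → ℝ) (x : Fin 3 → ℝ) : ℝ :=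
  pd 0 f x + β₂ x * pd 1 f x + β₃ x * pd 2 f x

section helpers

variable {U : Set (Fin 3 → ℝ)} {f g : (Fin 3 → ℝ) → ℝ} {x : Fin 3 → ℝ}

theorem pd_congr (hU : IsOpen U) (h : ∀ y ∈ U, f y = g y) (hx : x ∈ U) (i : Fin 3) :
    pd i f x = pd i g x := by
  unfold pd
  rw [Filter.EventuallyEq.fderiv_eq (Filter.eventuallyEq_of_mem (hU.mem_nhds hx) h)]

theorem smooth_diff (hU : IsOpen U) (hf : ContDiffOn ℝ (⊤ : ℕ∞) f U) (hx : x ∈ U) :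
    DifferentiableAt ℝ f x :=
  (hf.contDiffAt (hU.mem_nhds hx)).differentiableAt (by simp)

theorem smooth_pd (hU : IsOpen U) (hf : ContDiffOn ℝ (⊤ : ℕ∞) f U) (i : Fin 3) :
    ContDiffOn ℝ (⊤ : ℕ∞) (pd i f) U := by
  have h := hf.fderiv_of_isOpen (m := (⊤ : ℕ∞)) hU (by simp)
  exact h.clm_apply contDiffOn_const

theorem pd_comm (hU : IsOpen U) (hf : ContDiffOn ℝ (⊤ : ℕ∞) f U) (hx : x ∈ U) (i j : Fin 3) :
    pd i (pd j f) x = pd j (pd i f) x := by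
  have h := hf.fderiv_of_isOpen (m := (⊤ : ℕ∞)) hU (by simp)
  have hd : DifferentiableAt ℝ (fderiv ℝ f) x :=
    (h.contDiffAt (hU.mem_nhds hx)).differentiableAt (by simp)
  have key : ∀ a b : Fin 3, pd a (pd b f) x
      = fderiv ℝ (fderiv ℝ f) x (Pi.single a 1) (Pi.single b 1) := by
    intro a b
    have : pd b f = fun y => fderiv ℝ f y (Pi.single b 1) := rfl
    rw [this]
    unfold pd
    rw [fderiv_clm_apply hd (differentiableAt_const _)]
    simp
  rw [key, key]
  have hs : IsSymmSndFDerivAt ℝ f x :=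
    (hf.contDiffAt (hU.mem_nhds hx)).isSymmSndFDerivAt (by
      simp only [minSmoothness_of_isRCLikeNormedField]
      exact WithTop.coe_le_coe.2 (le_top : (2 : ℕ∞) ≤ ⊤))
  exact hs _ _

theorem pd_add' (hf : DifferentiableAt ℝ f x) (hg : DifferentiableAt ℝ g x) (i : Fin 3) :
    pd i (fun y => f y + g y) x = pd i f x + pd i g x := by
  unfold pd
  rw [fderiv_fun_add hf hg]; rfl

theorem pd_sub' (hf : DifferentiableAt ℝ f x) (hg : DifferentiableAt ℝ g x) (i : Fin 3) :
    pd i (fun y => f y - g y) x = pd i f x - pd i g x := by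
  unfold pd
  rw [fderiv_fun_sub hf hg]; rfl

theorem pd_mul' (hf : DifferentiableAt ℝ f x) (hg : DifferentiableAt ℝ g x) (i : Fin 3) :
    pd i (fun y => f y * g y) x = pd i f x * g x + f x * pd i g x := by
  unfold pd
  rw [fderiv_fun_mul hf hg]
  simp; ring

theorem pd_div' (hf : DifferentiableAt ℝ f x) (hg : DifferentiableAt ℝ g x) (h0 : g x ≠ 0)
    (i : Fin 3) :
    pd i (fun y => f y / g y) x = (pd i f x * g x - f x * pd i g x) / g x ^ 2 := by
  have hd : DifferentiableAt ℝ (fun y => f y / g y) x := by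
    simp only [div_eq_mul_inv]
    exact hf.mul (hg.inv h0)
  have h1 := pd_mul' hd hg i
  have h2 : pd i (fun y => f y / g y * g y) x = pd i f x := by
    unfold pd
    rw [Filter.EventuallyEq.fderiv_eq]
    filter_upwards [hg.continuousAt.eventually_ne h0] with y hy
    field_simp
  rw [h2] at h1
  rw [h1]
  field_simp
  ring

theorem pd_rpow' (hf : DifferentiableAt ℝ f x) (h0 : 0 < f x) (a : ℝ) (ha : a ≠ 0) (i : Fin 3) :
    pd i (fun y => f y ^ a / a) x = f x ^ (a - 1) * pd i f x := by
  unfold pd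
  have h := ((hf.hasFDerivAt.rpow_const (p := a) (Or.inl h0.ne')).mul_const a⁻¹).fderiv
  simp only [div_eq_mul_inv]
  rw [h]
  simp
  field_simp

end helpers

/-- Pure algebra at a point. -/
theorem final_algebra (r e K Q u0 u1 u2 w0 w1 w2 r0 r1 r2 K0 K1 K2 Q0 Q1 Q2 B0 B1 B2 dv : ℝ)
    (hr : r ≠ 0) (hQ : Q ≠ 0) (hu : u0 ≠ 0)
    (hm : r * dv + (u0 * r0 + u1 * r1 + u2 * r2) = 0)
    (hdiv : Q0 * w0 + Q1 * w1 + Q2 * w2 = K0 * u0 + K1 * u1 + K2 * u2 + K * dv)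
    (hw0 : Q * w0 = K * u0 + (B1 * u2 - B2 * u1))
    (hw1 : Q * w1 = K * u1 + (B2 * u0 - B0 * u2))
    (hw2 : Q * w2 = K * u2 + (B0 * u1 - B1 * u0))
    (hQ0 : Q0 = 2 * B0 - 2 * (e * r0)) (hQ1 : Q1 = 2 * B1 - 2 * (e * r1))
    (hQ2 : Q2 = 2 * B2 - 2 * (e * r2)) :
    (K0 * (r * Q) - K * (r0 * Q + r * Q0)) / (r * Q) ^ 2
      + u1 / u0 * ((K1 * (r * Q) - K * (r1 * Q + r * Q1)) / (r * Q) ^ 2)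
      + u2 / u0 * ((K2 * (r * Q) - K * (r2 * Q + r * Q2)) / (r * Q) ^ 2)
      + (e * r) / (2 * r ^ 2 * (Q / 2) ^ 2) *
        ((r1 * B2 - r2 * B1) + u1 / u0 * (r2 * B0 - r0 * B2) + u2 / u0 * (r0 * B1 - r1 * B0))
      = 0 := by
  have h : r * Q * (K0 * u0 + K1 * u1 + K2 * u2) - K * Q * (u0 * r0 + u1 * r1 + u2 * r2)
      - K * r * (u0 * Q0 + u1 * Q1 + u2 * Q2)
      + 2 * e * r * (u0 * (r1 * B2 - r2 * B1) + u1 * (r2 * B0 - r0 * B2)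
        + u2 * (r0 * B1 - r1 * B0)) = 0 := by
    have e1 : Q * (K0 * u0 + K1 * u1 + K2 * u2) = Q0 * (Q * w0) + Q1 * (Q * w1) + Q2 * (Q * w2)
        - Q * K * dv := by linear_combination -Q * hdiv
    rw [hw0, hw1, hw2] at e1
    subst hQ0 hQ1 hQ2
    linear_combination r * e1 - K * Q * hm
  have h' : (r * Q * (K0 * u0 + K1 * u1 + K2 * u2) - K * Q * (u0 * r0 + u1 * r1 + u2 * r2)
      - K * r * (u0 * Q0 + u1 * Q1 + u2 * Q2)
      + 2 * e * r * (u0 * (r1 * B2 - r2 * B1) + u1 * (r2 * B0 - r0 * B2)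
        + u2 * (r0 * B1 - r1 * B0))) / (u0 * (r * Q) ^ 2) = 0 := by rw [h]; simp
  rw [← h']
  field_simp
  ring

/-- Theorem 3.1: the transport equation (3.10) for `W/(ρG)`;
in particular `D(W/(ρG)) = 0` when the Bernoulli function is constant. -/
theorem transport_equation_for_W
    (U : Set (Fin 3 → ℝ)) (hU : IsOpen U) (γ : ℝ) (hγ1 : 1 < γ) (hγ3 : γ < 3)
    (ρ : (Fin 3 → ℝ) → ℝ) (u : Fin 3 → (Fin 3 → ℝ) → ℝ)
    (hρ : ContDiffOn ℝ (⊤ : ℕ∞) ρ U) (hu : ∀ i, ContDiffOn ℝ (⊤ : ℕ∞) (u i) U)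
    (hρpos : ∀ x ∈ U, 0 < ρ x) (hu1pos : ∀ x ∈ U, 0 < u 0 x)
    (hmass : ∀ x ∈ U,
      pd 0 (fun y => ρ y * u 0 y) x + pd 1 (fun y => ρ y * u 1 y) x
        + pd 2 (fun y => ρ y * u 2 y) x = 0)
    (hmom : ∀ i : Fin 3, ∀ x ∈ U,
      pd 0 (fun y => ρ y * u i y * u 0 y) x + pd 1 (fun y => ρ y * u i y * u 1 y) x
        + pd 2 (fun y => ρ y * u i y * u 2 y) x + pd i (fun y => ρ y ^ γ / γ) x = 0)
    (β₂ β₃ B G W : (Fin 3 → ℝ) → ℝ)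
    (hβ₂ : β₂ = fun y => u 1 y / u 0 y) (hβ₃ : β₃ = fun y => u 2 y / u 0 y)
    (hB : B = fun y => (u 0 y ^ 2 + u 1 y ^ 2 + u 2 y ^ 2) / 2 + ρ y ^ (γ - 1) / (γ - 1))
    (hG : G = fun y => 1 + β₂ y ^ 2 + β₃ y ^ 2)
    (hW : W = fun y => pd 1 β₃ y - pd 2 β₂ y + β₃ y * pd 0 β₂ y - β₂ y * pd 0 β₃ y) :
    (∀ x ∈ U,
      Dop β₂ β₃ (fun y => W y / (ρ y * G y)) x
        + ρ x ^ (γ - 1) / (2 * ρ x ^ 2 * (B x - ρ x ^ (γ - 1) / (γ - 1)) ^ 2) *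
          ((pd 1 ρ x * pd 2 B x - pd 2 ρ x * pd 1 B x)
            + β₂ x * (pd 2 ρ x * pd 0 B x - pd 0 ρ x * pd 2 B x)
            + β₃ x * (pd 0 ρ x * pd 1 B x - pd 1 ρ x * pd 0 B x)) = 0) ∧
    ((∃ B₀ : ℝ, ∀ x ∈ U, B x = B₀) →
      ∀ x ∈ U, Dop β₂ β₃ (fun y => W y / (ρ y * G y)) x = 0) := by
  have sd : ∀ {f : (Fin 3 → ℝ) → ℝ}, ContDiffOn ℝ (⊤ : ℕ∞) f U → ∀ {x}, x ∈ U →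
      DifferentiableAt ℝ f x := fun hf _ hx => smooth_diff hU hf hx
  -- the smooth auxiliary functions
  obtain ⟨Q, hQdef⟩ : ∃ Q : (Fin 3 → ℝ) → ℝ,
      Q = fun y => u 0 y * u 0 y + u 1 y * u 1 y + u 2 y * u 2 y := ⟨_, rfl⟩
  obtain ⟨w0, hw0⟩ : ∃ w : (Fin 3 → ℝ) → ℝ, w = fun y => pd 1 (u 2) y - pd 2 (u 1) y := ⟨_, rfl⟩
  obtain ⟨w1, hw1⟩ : ∃ w : (Fin 3 → ℝ) → ℝ, w = fun y => pd 2 (u 0) y - pd 0 (u 2) y := ⟨_, rfl⟩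
  obtain ⟨w2, hw2⟩ : ∃ w : (Fin 3 → ℝ) → ℝ, w = fun y => pd 0 (u 1) y - pd 1 (u 0) y := ⟨_, rfl⟩
  obtain ⟨K, hK⟩ : ∃ K : (Fin 3 → ℝ) → ℝ,
      K = fun y => u 0 y * w0 y + u 1 y * w1 y + u 2 y * w2 y := ⟨_, rfl⟩
  have sp : ∀ i j, ContDiffOn ℝ (⊤ : ℕ∞) (pd i (u j)) U := fun i j => smooth_pd hU (hu j) i
  have sQ : ContDiffOn ℝ (⊤ : ℕ∞) Q U := by
    rw [hQdef]
    exact (((hu 0).mul (hu 0)).add ((hu 1).mul (hu 1))).add ((hu 2).mul (hu 2))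
  have sw0 : ContDiffOn ℝ (⊤ : ℕ∞) w0 U := by rw [hw0]; exact (sp 1 2).sub (sp 2 1)
  have sw1 : ContDiffOn ℝ (⊤ : ℕ∞) w1 U := by rw [hw1]; exact (sp 2 0).sub (sp 0 2)
  have sw2 : ContDiffOn ℝ (⊤ : ℕ∞) w2 U := by rw [hw2]; exact (sp 0 1).sub (sp 1 0)
  have sK : ContDiffOn ℝ (⊤ : ℕ∞) K U := by
    rw [hK]
    exact (((hu 0).mul sw0).add ((hu 1).mul sw1)).add ((hu 2).mul sw2)
  have sh : ContDiffOn ℝ (⊤ : ℕ∞) (fun y => ρ y ^ (γ - 1) / (γ - 1)) U :=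
    (hρ.rpow_const_of_ne (fun y hy => (hρpos y hy).ne')).div_const _
  have hBQ : B = fun y => Q y * (1/2) + ρ y ^ (γ - 1) / (γ - 1) := by
    rw [hB, hQdef]; funext y; ring
  have sB : ContDiffOn ℝ (⊤ : ℕ∞) B U := by
    rw [hBQ]; exact (sQ.mul contDiffOn_const).add sh
  have hQpos : ∀ y ∈ U, 0 < Q y := by
    intro y hy
    have := hu1pos y hy
    simp only [hQdef]
    nlinarith [mul_pos this this, mul_self_nonneg (u 1 y), mul_self_nonneg (u 2 y)]
  -- derivatives of Q, B
  have dQ : ∀ i, ∀ y ∈ U, pd i Q y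
      = 2 * (u 0 y * pd i (u 0) y + u 1 y * pd i (u 1) y + u 2 y * pd i (u 2) y) := by
    intro i y hy
    have d := fun j => sd (hu j) hy
    rw [hQdef, pd_add' (((d 0).fun_mul (d 0)).fun_add ((d 1).fun_mul (d 1))) ((d 2).fun_mul (d 2)),
      pd_add' ((d 0).fun_mul (d 0)) ((d 1).fun_mul (d 1)), pd_mul' (d 0) (d 0), pd_mul' (d 1) (d 1),
      pd_mul' (d 2) (d 2)]
    ring
  have hpow : ∀ y ∈ U, ρ y ^ (γ - 1) = ρ y ^ (γ - 1 - 1) * ρ y := by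
    intro y hy
    rw [Real.rpow_sub_one (hρpos y hy).ne' (γ - 1)]
    have := (hρpos y hy).ne'
    field_simp
  have dB : ∀ i, ∀ y ∈ U, pd i Q y = 2 * pd i B y - 2 * (ρ y ^ (γ - 1 - 1) * pd i ρ y) := by
    intro i y hy
    have dc : DifferentiableAt ℝ (fun _ : Fin 3 → ℝ => (1/2 : ℝ)) y := differentiableAt_const _
    rw [hBQ, pd_add' ((sd sQ hy).fun_mul dc) (sd sh hy), pd_mul' (sd sQ hy) dc,
      pd_rpow' (sd hρ hy) (hρpos y hy) _ (by linarith)]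
    have : pd i (fun _ : Fin 3 → ℝ => (1/2 : ℝ)) y = 0 := by simp [pd]
    rw [this]; ring
  -- mass and momentum
  have mass : ∀ y ∈ U, ρ y * (pd 0 (u 0) y + pd 1 (u 1) y + pd 2 (u 2) y)
      + (u 0 y * pd 0 ρ y + u 1 y * pd 1 ρ y + u 2 y * pd 2 ρ y) = 0 := by
    intro y hy
    have d := fun j => sd (hu j) hy
    have h := hmass y hy
    rw [pd_mul' (sd hρ hy) (d 0), pd_mul' (sd hρ hy) (d 1), pd_mul' (sd hρ hy) (d 2)] at h
    linarith
  have mom : ∀ i, ∀ y ∈ U, u 0 y * pd 0 (u i) y + u 1 y * pd 1 (u i) y + u 2 y * pd 2 (u i) y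
      + ρ y ^ (γ - 1 - 1) * pd i ρ y = 0 := by
    intro i y hy
    have d := fun j => sd (hu j) hy
    have dr := sd hρ hy
    have h := hmom i y hy
    rw [pd_mul' (dr.fun_mul (d i)) (d 0), pd_mul' (dr.fun_mul (d i)) (d 1), pd_mul' (dr.fun_mul (d i)) (d 2),
      pd_mul' dr (d i), pd_mul' dr (d i), pd_mul' dr (d i),
      pd_rpow' dr (hρpos y hy) _ (by linarith), hpow y hy] at h
    have hm := mass y hy
    apply mul_left_cancel₀ (hρpos y hy).ne'
    linear_combination h - u i y * hm
  -- gradient of B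
  have gB0 : ∀ y ∈ U, pd 0 B y = u 1 y * w2 y - u 2 y * w1 y := by
    intro y hy
    have h1 := dB 0 y hy; have h2 := dQ 0 y hy; have h3 := mom 0 y hy
    simp only [hw1, hw2]; linear_combination -h1/2 + h2/2 + h3
  have gB1 : ∀ y ∈ U, pd 1 B y = u 2 y * w0 y - u 0 y * w2 y := by
    intro y hy
    have h1 := dB 1 y hy; have h2 := dQ 1 y hy; have h3 := mom 1 y hy
    simp only [hw0, hw2]; linear_combination -h1/2 + h2/2 + h3
  have gB2 : ∀ y ∈ U, pd 2 B y = u 0 y * w1 y - u 1 y * w0 y := by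
    intro y hy
    have h1 := dB 2 y hy; have h2 := dQ 2 y hy; have h3 := mom 2 y hy
    simp only [hw0, hw1]; linear_combination -h1/2 + h2/2 + h3
  -- decomposition of the vorticity
  have v0 : ∀ y ∈ U, Q y * w0 y = K y * u 0 y + (pd 1 B y * u 2 y - pd 2 B y * u 1 y) := by
    intro y hy
    rw [gB1 y hy, gB2 y hy]; simp only [hQdef, hK]; ring
  have v1 : ∀ y ∈ U, Q y * w1 y = K y * u 1 y + (pd 2 B y * u 0 y - pd 0 B y * u 2 y) := by
    intro y hy
    rw [gB0 y hy, gB2 y hy]; simp only [hQdef, hK]; ring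
  have v2 : ∀ y ∈ U, Q y * w2 y = K y * u 2 y + (pd 0 B y * u 1 y - pd 1 B y * u 0 y) := by
    intro y hy
    rw [gB0 y hy, gB1 y hy]; simp only [hQdef, hK]; ring
  -- derivative of the decomposition
  have gen : ∀ (w a b c d e : (Fin 3 → ℝ) → ℝ), ContDiffOn ℝ (⊤ : ℕ∞) w U →
      ContDiffOn ℝ (⊤ : ℕ∞) a U → ContDiffOn ℝ (⊤ : ℕ∞) b U → ContDiffOn ℝ (⊤ : ℕ∞) c U →
      ContDiffOn ℝ (⊤ : ℕ∞) d U → ContDiffOn ℝ (⊤ : ℕ∞) e U →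
      (∀ y ∈ U, Q y * w y = K y * a y + (b y * c y - d y * e y)) → ∀ i, ∀ y ∈ U,
      pd i Q y * w y + Q y * pd i w y = pd i K y * a y + K y * pd i a y
        + (pd i b y * c y + b y * pd i c y - (pd i d y * e y + d y * pd i e y)) := by
    intro w a b c d e hw ha hb hc hd he h i y hy
    have := pd_congr hU h hy i
    rwa [pd_mul' (sd sQ hy) (sd hw hy),
      pd_add' ((sd sK hy).fun_mul (sd ha hy))
        (((sd hb hy).fun_mul (sd hc hy)).fun_sub ((sd hd hy).fun_mul (sd he hy))),
      pd_sub' ((sd hb hy).fun_mul (sd hc hy)) ((sd hd hy).fun_mul (sd he hy)),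
      pd_mul' (sd sK hy) (sd ha hy), pd_mul' (sd hb hy) (sd hc hy),
      pd_mul' (sd hd hy) (sd he hy)] at this
  have sBp := fun i => smooth_pd hU sB i
  have divw : ∀ y ∈ U, pd 0 w0 y + pd 1 w1 y + pd 2 w2 y = 0 := by
    intro y hy
    rw [hw0, hw1, hw2, pd_sub' (sd (sp 1 2) hy) (sd (sp 2 1) hy),
      pd_sub' (sd (sp 2 0) hy) (sd (sp 0 2) hy), pd_sub' (sd (sp 0 1) hy) (sd (sp 1 0) hy),
      pd_comm hU (hu 2) hy 0 1, pd_comm hU (hu 1) hy 0 2, pd_comm hU (hu 0) hy 1 2]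
    ring
  have divv : ∀ y ∈ U, pd 0 Q y * w0 y + pd 1 Q y * w1 y + pd 2 Q y * w2 y
      = pd 0 K y * u 0 y + pd 1 K y * u 1 y + pd 2 K y * u 2 y
        + K y * (pd 0 (u 0) y + pd 1 (u 1) y + pd 2 (u 2) y) := by
    intro y hy
    have a0 := gen w0 (u 0) (pd 1 B) (u 2) (pd 2 B) (u 1) sw0 (hu 0) (sBp 1) (hu 2) (sBp 2) (hu 1)
      v0 0 y hy
    have a1 := gen w1 (u 1) (pd 2 B) (u 0) (pd 0 B) (u 2) sw1 (hu 1) (sBp 2) (hu 0) (sBp 0) (hu 2)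
      v1 1 y hy
    have a2 := gen w2 (u 2) (pd 0 B) (u 1) (pd 1 B) (u 0) sw2 (hu 2) (sBp 0) (hu 1) (sBp 1) (hu 0)
      v2 2 y hy
    have c01 := pd_comm hU sB hy 0 1
    have c02 := pd_comm hU sB hy 0 2
    have c12 := pd_comm hU sB hy 1 2
    have dw := divw y hy
    have orth : pd 0 B y * w0 y + pd 1 B y * w1 y + pd 2 B y * w2 y = 0 := by
      rw [gB0 y hy, gB1 y hy, gB2 y hy]; ring
    have e0 : w0 y = pd 1 (u 2) y - pd 2 (u 1) y := by rw [hw0]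
    have e1 : w1 y = pd 2 (u 0) y - pd 0 (u 2) y := by rw [hw1]
    have e2 : w2 y = pd 0 (u 1) y - pd 1 (u 0) y := by rw [hw2]
    linear_combination a0 + a1 + a2 - Q y * dw + u 2 y * c01 - u 1 y * c02 + u 0 y * c12
      - orth + pd 0 B y * e0 + pd 1 B y * e1 + pd 2 B y * e2
  -- rewriting W / (ρ G)
  have hm : ∀ y ∈ U, W y / (ρ y * G y) = K y / (ρ y * Q y) := by
    intro y hy
    have d := fun j => sd (hu j) hy
    have h0 := (hu1pos y hy).ne'
    have hr := (hρpos y hy).ne'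
    have hq := (hQpos y hy).ne'
    have hGQ : G y = Q y / u 0 y ^ 2 := by
      simp only [hG, hβ₂, hβ₃, hQdef]; field_simp
    have hWK : W y = K y / u 0 y ^ 2 := by
      simp only [hW, hβ₂, hβ₃, pd_div' (d 1) (d 0) h0, pd_div' (d 2) (d 0) h0, hK, hw0, hw1, hw2]
      field_simp
      ring
    rw [hGQ, hWK]
    field_simp
  have main : ∀ x ∈ U,
      Dop β₂ β₃ (fun y => W y / (ρ y * G y)) x
        + ρ x ^ (γ - 1) / (2 * ρ x ^ 2 * (B x - ρ x ^ (γ - 1) / (γ - 1)) ^ 2) *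
          ((pd 1 ρ x * pd 2 B x - pd 2 ρ x * pd 1 B x)
            + β₂ x * (pd 2 ρ x * pd 0 B x - pd 0 ρ x * pd 2 B x)
            + β₃ x * (pd 0 ρ x * pd 1 B x - pd 1 ρ x * pd 0 B x)) = 0 := by
    intro x hx
    have hr := (hρpos x hx).ne'
    have hq := (hQpos x hx).ne'
    have dm : ∀ i, pd i (fun y => W y / (ρ y * G y)) x
        = (pd i K x * (ρ x * Q x) - K x * (pd i ρ x * Q x + ρ x * pd i Q x))
          / (ρ x * Q x) ^ 2 := by
      intro i
      rw [pd_congr hU hm hx i, pd_div' (sd sK hx) ((sd hρ hx).fun_mul (sd sQ hx)) (mul_ne_zero hr hq),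
        pd_mul' (sd hρ hx) (sd sQ hx)]
    have hb2 : β₂ x = u 1 x / u 0 x := by rw [hβ₂]
    have hb3 : β₃ x = u 2 x / u 0 x := by rw [hβ₃]
    have hBh : B x - ρ x ^ (γ - 1) / (γ - 1) = Q x / 2 := by rw [hBQ]; ring
    unfold Dop
    rw [dm, dm, dm, hBh, hb2, hb3, hpow x hx]
    exact final_algebra _ _ _ _ _ _ _ (w0 x) (w1 x) (w2 x) _ _ _ _ _ _ _ _ _ _ _ _ _
      hr hq (hu1pos x hx).ne' (mass x hx) (divv x hx) (v0 x hx) (v1 x hx) (v2 x hx)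
      (dB 0 x hx) (dB 1 x hx) (dB 2 x hx)
  refine ⟨main, ?_⟩
  rintro ⟨B₀, hB₀⟩ x hx
  have hz : ∀ i, pd i B x = 0 := by
    intro i
    rw [pd_congr (g := fun _ => B₀) hU hB₀ hx i]
    simp [pd]
  have h := main x hx
  simpa [hz] using h
end
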